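/- arXiv:2101.07402 — 2 statements merged into one kernel-verified Lean document; each statement's English description precedes it below -/
import Mathlib

section
/- For every pair of complex numbers s, t and every integer n ≥ 1, the Dirichlet convolution identity ∑_{d ∣ n} α_d(s)·α_{n/d}(t) = α_n(s + t) holds, where the sum runs over all positive divisors d of n. -/
/-!
Both sides are multiplicative functions of `n`: the left-hand side is the Dirichlet convolution of
two multiplicative functions. Hence it suffices to compare them at prime powers `p ^ k`, where the
claim becomes the Chu–Vandermonde identity `∑_{i + j = k} [s;i] [t;j] = [s+t;k]`. The latter is
Mathlib's Vandermonde identity for generalized binomial coefficients, because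
`[z;k] = (-1)^k * Ring.choose (-z) k`.
-/

open Finset

/-- The Pochhammer polynomial `[z;k] = (1/k!) * ∏_{i=0}^{k-1} (z+i)`, with `[z;0] = 1`. -/
noncomputable def poch (z : ℂ) (k : ℕ) : ℂ :=
  ((k.factorial : ℂ))⁻¹ * ∏ i ∈ Finset.range k, (z + i)

/-- The prime-signature polynomial `α_n(z) = ∏_{p^k ∥ n} [z;k]`, with `α_1(z) = 1`. -/
noncomputable def alphaSig (n : ℕ) (z : ℂ) : ℂ :=
  ∏ p ∈ n.primeFactors, poch z (n.factorization p)

theorem poch_zero (z : ℂ) : poch z 0 = 1 := by simp [poch]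

theorem poch_eq_choose (z : ℂ) (k : ℕ) : poch z k = (-1) ^ k * Ring.choose (-z) k := by
  have h : ∀ k : ℕ, (descPochhammer ℤ k).smeval (-z) =
      (-1) ^ k * ∏ i ∈ Finset.range k, (z + i) := by
    intro k
    induction k with
    | zero => simp
    | succ k ih =>
      rw [descPochhammer_succ_right, Polynomial.smeval_mul, ih, Finset.prod_range_succ]
      simp only [Polynomial.smeval_sub, Polynomial.smeval_X, Polynomial.smeval_natCast]
      simp
      ring
  rw [Ring.choose_eq_smul, h, poch, smul_eq_mul, mul_left_comm, ← mul_assoc ((-1) ^ k),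
    ← mul_pow]
  simp

/-- The Chu–Vandermonde identity for the Pochhammer polynomials. -/
theorem poch_add (s t : ℂ) (k : ℕ) :
    ∑ ij ∈ Finset.HasAntidiagonal.antidiagonal k, poch s ij.1 * poch t ij.2 = poch (s + t) k := by
  rw [poch_eq_choose, neg_add, Ring.add_choose_eq k (Commute.all _ _), Finset.mul_sum]
  refine Finset.sum_congr rfl fun ij hij => ?_
  rw [Finset.HasAntidiagonal.mem_antidiagonal] at hij
  rw [poch_eq_choose, poch_eq_choose, ← hij, pow_add]
  ring

theorem alphaSig_prime_pow {p : ℕ} (hp : p.Prime) (k : ℕ) (z : ℂ) :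
    alphaSig (p ^ k) z = poch z k := by
  rcases Nat.eq_zero_or_pos k with rfl | hk
  · simp [alphaSig, poch_zero]
  · rw [alphaSig, Nat.primeFactors_prime_pow hk.ne' hp]
    simp [hp.factorization_self]

theorem alphaSig_mul_of_coprime {m n : ℕ} (h : m.Coprime n) (z : ℂ) :
    alphaSig (m * n) z = alphaSig m z * alphaSig n z := by
  simp only [alphaSig]
  rw [h.primeFactors_mul, Finset.prod_union h.disjoint_primeFactors]
  congr 1
  · exact Finset.prod_congr rfl fun p hp => by
      rw [Nat.factorization_eq_of_coprime_left h (Nat.mem_primeFactors_iff_mem_primeFactorsList.1 hp)]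
  · exact Finset.prod_congr rfl fun p hp => by
      rw [Nat.factorization_eq_of_coprime_right h (Nat.mem_primeFactors_iff_mem_primeFactorsList.1 hp)]

/-- `n ↦ α_n(z)` as an arithmetic function. Its value at `0` is set to `0`, whereas
`alphaSig 0 z = 1` (an empty product). -/
noncomputable def alphaArith (z : ℂ) : ArithmeticFunction ℂ :=
  ⟨fun n => if n = 0 then 0 else alphaSig n z, by simp⟩

theorem alphaArith_apply (z : ℂ) {n : ℕ} (hn : n ≠ 0) : alphaArith z n = alphaSig n z := by
  simp [alphaArith, hn]

theorem alphaArith_isMultiplicative (z : ℂ) : (alphaArith z).IsMultiplicative := by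
  rw [ArithmeticFunction.IsMultiplicative.iff_ne_zero]
  refine ⟨by simp [alphaArith, alphaSig], fun {m n} hm hn h => ?_⟩
  rw [alphaArith_apply z hm, alphaArith_apply z hn, alphaArith_apply z (mul_ne_zero hm hn),
    alphaSig_mul_of_coprime h]

theorem alphaArith_mul (s t : ℂ) : alphaArith s * alphaArith t = alphaArith (s + t) := by
  rw [ArithmeticFunction.IsMultiplicative.eq_iff_eq_on_prime_powers _
    ((alphaArith_isMultiplicative s).mul (alphaArith_isMultiplicative t)) _
    (alphaArith_isMultiplicative (s + t))]
  intro p k hp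
  have hne : ∀ i, p ^ i ≠ 0 := fun i => pow_ne_zero i hp.ne_zero
  rw [ArithmeticFunction.mul_apply, alphaArith_apply _ (hne k), alphaSig_prime_pow hp, ← poch_add,
    Nat.sum_divisorsAntidiagonal (fun a b => alphaArith s a * alphaArith t b),
    Nat.sum_divisors_prime_pow hp, Finset.Nat.sum_antidiagonal_eq_sum_range_succ_mk]
  refine Finset.sum_congr rfl fun i hi => ?_
  have hik : i ≤ k := Nat.lt_succ_iff.1 (Finset.mem_range.1 hi)
  rw [Nat.pow_div hik hp.pos, alphaArith_apply _ (hne _), alphaArith_apply _ (hne _),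
    alphaSig_prime_pow hp, alphaSig_prime_pow hp]

theorem alphaSig_dirichlet_convolution (s t : ℂ) (n : ℕ) (hn : 1 ≤ n) :
    ∑ d ∈ n.divisors, alphaSig d s * alphaSig (n / d) t = alphaSig n (s + t) := by
  have hn0 : n ≠ 0 := Nat.one_le_iff_ne_zero.1 hn
  rw [← alphaArith_apply _ hn0, ← alphaArith_mul, ArithmeticFunction.mul_apply,
    Nat.sum_divisorsAntidiagonal (fun a b => alphaArith s a * alphaArith t b)]
  refine Finset.sum_congr rfl fun d hd => ?_
  have hdn : d ∣ n := Nat.dvd_of_mem_divisors hd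
  rw [alphaArith_apply _ (ne_zero_of_dvd_ne_zero hn0 hdn),
    alphaArith_apply _ (Nat.div_ne_zero_iff_of_dvd hdn |>.2
      ⟨hn0, ne_zero_of_dvd_ne_zero hn0 hdn⟩)]
end

section
/- For every complex number s with Re(s) > 1 and every complex number z, the series ∑_{n=1}^{∞} α_n(z)/n^s converges absolutely (i.e., the function n ↦ α_n(z)/n^s is summable). -/
/-!
Choose a natural number `N ≥ ‖z‖`. Termwise comparison of the factors gives
`‖[z;k]‖ ≤ [N;k] = multichoose N k`. On the other hand, `multichoose N k` is the value at `p ^ k` of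
the `N`-fold Dirichlet convolution power `ζ ^ N`, by induction on `N` and the hockey-stick identity
`∑_{j ≤ k} multichoose N j = multichoose (N + 1) k`. As `ζ ^ N` is multiplicative, it follows that
`‖α_n(z)‖ ≤ (ζ ^ N) n`. The L-series of `ζ` converges absolutely for `Re s > 1`, hence so does that
of the Dirichlet convolution power `ζ ^ N`, and the result follows by comparison.
-/

open Finset

open scoped ArithmeticFunction.zeta

lemma succ_mul_multichoose_succ (N k : ℕ) :
    (k + 1) * N.multichoose (k + 1) = (N + k) * N.multichoose k := by
  cases N with
  | zero => cases k <;> simp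
  | succ N =>
    have h := Nat.add_one_mul_choose_eq (N + k) k
    simp only [Nat.multichoose_eq]
    rw [show N + 1 + (k + 1) - 1 = N + k + 1 by omega, show N + 1 + k - 1 = N + k by omega]
    linarith

lemma sum_range_multichoose (N k : ℕ) :
    ∑ j ∈ range (k + 1), N.multichoose j = (N + 1).multichoose k := by
  induction k with
  | zero => simp
  | succ k ih => rw [sum_range_succ, ih, Nat.multichoose_succ_succ, add_comm]

lemma norm_poch_le (z : ℂ) (N : ℕ) (hN : ‖z‖ ≤ N) (k : ℕ) :
    ‖poch z k‖ ≤ N.multichoose k := by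
  induction k with
  | zero => simp [poch]
  | succ k ih =>
    have hk : (0 : ℝ) < (k : ℝ) + 1 := by positivity
    have hrec : poch z (k + 1) = poch z k * (z + k) / (k + 1) := by
      simp only [poch, prod_range_succ, Nat.factorial_succ]
      push_cast
      rw [mul_inv]
      ring
    have hnorm : ‖(k : ℂ) + 1‖ = (k : ℝ) + 1 := by
      exact_mod_cast Complex.norm_natCast (k + 1)
    have hmc : ((k : ℝ) + 1) * N.multichoose (k + 1) = (N + k) * N.multichoose k := by
      exact_mod_cast succ_mul_multichoose_succ N k
    have hz : ‖z + k‖ ≤ N + k := by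
      refine (norm_add_le _ _).trans ?_
      simpa using hN
    rw [hrec, norm_div, norm_mul, hnorm, div_le_iff₀ hk, mul_comm _ ((k : ℝ) + 1), hmc, mul_comm]
    gcongr

lemma zeta_pow_apply_prime_pow (N p k : ℕ) (hp : p.Prime) :
    (ζ ^ N) (p ^ k) = N.multichoose k := by
  induction N generalizing k with
  | zero =>
    cases k with
    | zero => simp
    | succ k =>
      rw [pow_zero, ArithmeticFunction.one_apply_ne (Nat.one_lt_pow k.succ_ne_zero hp.one_lt).ne']
      simp
  | succ N ih =>
    rw [pow_succ, ArithmeticFunction.mul_zeta_apply, Nat.sum_divisors_prime_pow hp,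
      ← sum_range_multichoose]
    exact sum_congr rfl fun j _ => ih j

lemma norm_alphaSig_le (z : ℂ) (N : ℕ) (hN : ‖z‖ ≤ N) (n : ℕ) (hn : n ≠ 0) :
    ‖alphaSig n z‖ ≤ ((ζ ^ N) n : ℕ) := by
  have hmul : (ζ ^ N).IsMultiplicative := ArithmeticFunction.isMultiplicative_zeta.pow
  rw [hmul.multiplicative_factorization _ hn, alphaSig, norm_prod, Finsupp.prod,
    Nat.support_factorization, Nat.cast_prod]
  refine prod_le_prod (fun _ _ => norm_nonneg _) fun p hp => ?_
  rw [zeta_pow_apply_prime_pow _ _ _ (Nat.prime_of_mem_primeFactors hp)]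
  exact norm_poch_le z N hN _

lemma LSeriesSummable_zeta_pow (s : ℂ) (hs : 1 < s.re) (N : ℕ) :
    LSeriesSummable (fun n => (((ζ ^ N) n : ℕ) : ℂ)) s := by
  induction N with
  | zero =>
    -- `ζ ^ 0` is the convolution unit, whose values are bounded by `1`.
    refine LSeriesSummable_of_bounded_of_one_lt_re (m := 1) (fun n _ => ?_) hs
    rw [pow_zero, ArithmeticFunction.one_apply]
    split_ifs <;> simp
  | succ N ih =>
    have h := ArithmeticFunction.LSeriesSummable_mul
      (f := ((ζ ^ N : ArithmeticFunction ℕ) : ArithmeticFunction ℂ))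
      (g := ((ζ : ArithmeticFunction ℕ) : ArithmeticFunction ℂ)) (s := s)
      (by simpa using ih)
      (by simpa using ArithmeticFunction.LSeriesSummable_zeta_iff.mpr hs)
    rw [← ArithmeticFunction.natCoe_mul, ← pow_succ] at h
    simpa using h

theorem alphaSig_dirichlet_summable (s : ℂ) (hs : 1 < s.re) (z : ℂ) :
    Summable (fun n : ℕ => alphaSig (n + 1) z / ((n : ℂ) + 1) ^ s) := by
  obtain ⟨N, hN⟩ := exists_nat_ge ‖z‖
  have h := (summable_nat_add_iff 1).mpr (LSeriesSummable_zeta_pow s hs N).norm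
  refine Summable.of_norm_bounded h fun n => ?_
  rw [LSeries.term_of_ne_zero n.succ_ne_zero, norm_div, norm_div, Complex.norm_natCast,
    Nat.cast_succ]
  gcongr
  exact norm_alphaSig_le z N hN _ n.succ_ne_zero
end
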